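/- Let 2 ≤ a < b be integers, g = lcm(a,b), ā = g/a, b̄ = g/b, and let k ≥ ā, l ≥ 1, m ≥ 0 be integers. Let S = {x ∈ {-1,0,1}^{k+l+m} : a·Σ_{i=1}^{k} x_i + b·Σ_{i=k+1}^{k+l} x_i + g·Σ_{i=k+l+1}^{k+l+m} x_i = 0} (the cut associated to the partition (g^m,a^k,b^l)), let π ∈ P(k+l+m) be the partition whose only non-singleton block is {1,…,ā}, let T = {z ∈ {-1,0,1}^{k} : Σ_{i=1}^{k} z_i = 0}, and let ν ∈ P(k) be the partition whose only non-singleton block is {1,…,ā}. Then: (i) π↓S = {ρ ∈ P(k+l+m) : ρ|_{{1,…,k}} ∈ ν↓T}; (ii) S ∖ (π↓S) = {x ∈ {-1,0,1}^{k+l+m} : Σ_{i=1}^{k} x_i = 0, |Plus(x_1,…,x_k)| < ā, and b·Σ_{i=k+1}^{k+l} x_i + g·Σ_{i=k+l+1}^{k+l+m} x_i = 0}; and (iii) T ∖ (ν↓T) = {z ∈ T : |Plus(z)| < ā}, so that S ∖ (π↓S) = {x : (x_1,…,x_k) ∈ T∖(ν↓T) and (x_{k+1},…,x_{k+l+m})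 ∈ U}, where U = {y ∈ {-1,0,1}^{l+m} : Σ_{i=1}^{l} y_i + b̄·Σ_{i=l+1}^{l+m} y_i = 0} is the cut associated to (b̄^m,1^l). -/

import Mathlib

/-- A vector in ℝ^n with all coordinates in {-1,0,1}. -/
def IsCube {n : ℕ} (x : Fin n → ℝ) : Prop := ∀ i, x i = -1 ∨ x i = 0 ∨ x i = 1

def PlusSet {n : ℕ} (x : Fin n → ℝ) : Set (Fin n) := {i | x i = 1}

def MinusSet {n : ℕ} (x : Fin n → ℝ) : Set (Fin n) := {i | x i = -1}

/-- An `n`-cut: a span-closed subset of {-1,0,1}^n all of whose nonzero elements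
have nonempty Plus and Minus sets. -/
def IsCut {n : ℕ} (S : Set (Fin n → ℝ)) : Prop :=
  (∀ x ∈ S, IsCube x) ∧
  ((Submodule.span ℝ S : Set (Fin n → ℝ)) ∩ {x | IsCube x}) = S ∧
  ∀ x ∈ S, x ≠ 0 → (PlusSet x).Nonempty ∧ (MinusSet x).Nonempty
/-- The multiset of coordinates where `x` equals 1 (each appearing once). -/
noncomputable def plusM {n : ℕ} (x : Fin n → ℝ) : Multiset (Fin n) :=
  (Finset.univ.filter (fun i => x i = 1)).val

/-- The multiset of coordinates where `x` equals -1 (each appearing once). -/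
noncomputable def minusM {n : ℕ} (x : Fin n → ℝ) : Multiset (Fin n) :=
  (Finset.univ.filter (fun i => x i = -1)).val

/-- One step of the closure operation `⇓S` on collections of multisubsets of `[n]`:
(2) merge two blocks; (3) replace, inside one block, one copy of each element of
`Plus(x)` by one copy of each element of `Minus(x)`, for some `x ∈ S`. -/
inductive DownStep {n : ℕ} (S : Set (Fin n → ℝ)) :
    Multiset (Multiset (Fin n)) → Multiset (Multiset (Fin n)) → Prop
  | merge (B₁ B₂ : Multiset (Fin n)) (rest : Multiset (Multiset (Fin n))) :
      DownStep S (B₁ ::ₘ B₂ ::ₘ rest) ((B₁ + B₂) ::ₘ rest)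
  | swap (B₁ : Multiset (Fin n)) (rest : Multiset (Multiset (Fin n))) (x : Fin n → ℝ)
      (hx : x ∈ S) (hsub : plusM x ≤ B₁) :
      DownStep S (B₁ ::ₘ rest) ((B₁ - plusM x + minusM x) ::ₘ rest)

/-- A multiset of multisets of `[n]` which is an honest partition of `[n]`:
all blocks nonempty, globally no repetitions, and every element covered. -/
def IsPartitionM {n : ℕ} (A : Multiset (Multiset (Fin n))) : Prop :=
  (∀ B ∈ A, B ≠ 0) ∧ A.sum.Nodup ∧ ∀ i : Fin n, i ∈ A.sum

/-- `π ↓ S`: the set of honest partitions of `[n]` reachable from `π` by `⇓S`-steps. -/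
def downClos {n : ℕ} (S : Set (Fin n → ℝ)) (π : Multiset (Multiset (Fin n))) :
    Set (Multiset (Multiset (Fin n))) :=
  {ρ | IsPartitionM ρ ∧ Relation.ReflTransGen (DownStep S) π ρ}

/-- The partition of `[n]` whose only non-singleton blocks are `Plus(s)` and `Minus(s)`. -/
noncomputable def partOf {n : ℕ} (s : Fin n → ℝ) : Multiset (Multiset (Fin n)) :=
  plusM s ::ₘ minusM s ::ₘ
    ((Finset.univ.filter (fun i => s i = 0)).val.map (fun i => ({i} : Multiset (Fin n))))

/-- `S ∖ Π`: remove from `S` every element `s` whose associated partition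
(non-singleton blocks `Plus(s)`, `Minus(s)`) lies in `Π`. -/
noncomputable def cutMinus {n : ℕ} (S : Set (Fin n → ℝ))
    (P : Set (Multiset (Multiset (Fin n)))) : Set (Fin n → ℝ) :=
  {s | s ∈ S ∧ partOf s ∉ P}

/-- The partition of `[n]` whose only (potentially) non-singleton block is `A`. -/
def onlyBlock {n : ℕ} (A : Finset (Fin n)) : Multiset (Multiset (Fin n)) :=
  A.val ::ₘ ((Finset.univ \ A).val.map (fun i => ({i} : Multiset (Fin n))))

/-- Restriction of a partition of `[n]` to the first `l` coordinates `{0,…,l-1}`. -/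
def restrictFirst {n : ℕ} (l : ℕ) (ρ : Multiset (Multiset (Fin n))) :
    Multiset (Multiset (Fin l)) :=
  (ρ.map (fun B => B.filterMap
    (fun i => if h : (i : ℕ) < l then some (⟨(i : ℕ), h⟩ : Fin l) else none))).filter
    (fun B => B ≠ 0)

/-- The cut associated to the partition `(g^m, a^k, b^l)`: first `k` coordinates
have weight `a`, the next `l` have weight `b`, the last `m` have weight `g`. -/
noncomputable def SGAB (a b g k l m : ℕ) : Set (Fin (k + l + m) → ℝ) :=
  {x | IsCube x ∧ ∑ i : Fin (k + l + m),
    (if (i : ℕ) < k then (a : ℝ) else if (i : ℕ) < k + l then (b : ℝ) else (g : ℝ)) * x i = 0}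

/-- The cut associated to the partition `(1^k)`. -/
noncomputable def TOnes (k : ℕ) : Set (Fin k → ℝ) :=
  {z | IsCube z ∧ ∑ i, z i = 0}

/-- The cut associated to the partition `(b̄^m, 1^l)`: first `l` coordinates have
weight 1, last `m` coordinates have weight `b̄`. -/
noncomputable def UBbar (bbar l m : ℕ) : Set (Fin (l + m) → ℝ) :=
  {y | IsCube y ∧ ∑ i : Fin (l + m), (if (i : ℕ) < l then 1 else (bbar : ℝ)) * y i = 0}

/-- The partition of `[n]` whose only non-singleton block is `{0,…,a-1}`. -/
def firstBlock (a n : ℕ) : Multiset (Multiset (Fin n)) :=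
  onlyBlock (Finset.univ.filter (fun i : Fin n => (i : ℕ) < a))

/-!
For positive weights `w`, a cube vector lies in the cut of `w` iff its plus and minus sets have the
same total weight. Two elements of equal weight may be exchanged, and then blocks merged, so a
partition with a block containing `d` elements of weight `a` is reachable from any partition whose
only non-singleton block consists of `d` elements of weight `a`.

Conversely, suppose that all weights other than `a` are multiples of `b` and that `d` divides
`b / gcd(a, b)`. Then a vector of the cut has as many plus as minus entries of weight `a`, modulo
`d`. Hence the residues modulo `d` of the numbers of elements of weight `a` in the blocks have a sum
that no step increases. It is too small at the start for a partition into blocks with fewer than `d`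
elements of weight `a` to be reached. Both `(g^m, a^k, b^l)` and `(1^k)` (with `b = d`) are of this
form.
-/

open Relation

section Reachability

variable {n : ℕ} {S : Set (Fin n → ℝ)}

/-- `DownReach S P Q` says that `Q ∈ P⇓S`. -/
abbrev DownReach (S : Set (Fin n → ℝ)) (P Q : Multiset (Multiset (Fin n))) : Prop :=
  ReflTransGen (DownStep S) P Q

theorem downReach_merge_singletons (B C : Multiset (Fin n)) (R : Multiset (Multiset (Fin n))) :
    DownReach S (B ::ₘ (C.map ({·}) + R)) ((B + C) ::ₘ R) := by
  induction C using Multiset.induction_on generalizing B with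
  | empty => simpa using ReflTransGen.refl
  | cons i C ih =>
    have merge_head := DownStep.merge (S := S) B {i} (C.map ({·}) + R)
    have merge_tail := ih (B + {i})
    rw [add_assoc, Multiset.singleton_add] at merge_tail
    rw [Multiset.map_cons, Multiset.cons_add]
    exact .head merge_head merge_tail

theorem downReach_of_singletons {P : Multiset (Multiset (Fin n))} (hP : ∀ B ∈ P, B ≠ 0)
    (R : Multiset (Multiset (Fin n))) :
    DownReach S (P.sum.map ({·}) + R) (P + R) := by
  induction P using Multiset.induction_on generalizing R with
  | empty => simpa using ReflTransGen.refl
  | cons B P ih =>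
    obtain ⟨i, hi⟩ := Multiset.exists_mem_of_ne_zero (hP B (Multiset.mem_cons_self _ _))
    obtain ⟨C, rfl⟩ := Multiset.exists_cons_of_mem hi
    have merge_block := downReach_merge_singletons (S := S) {i} C (P.sum.map ({·}) + R)
    have merge_rest := ih (fun B hB => hP B (Multiset.mem_cons_of_mem hB)) ((i ::ₘ C) ::ₘ R)
    simp only [Multiset.sum_cons, Multiset.map_add, Multiset.map_cons, Multiset.cons_add,
      Multiset.add_cons, add_assoc, Multiset.singleton_add] at merge_block merge_rest ⊢
    exact merge_block.trans merge_rest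

theorem IsPartitionM.sum_eq {ρ : Multiset (Multiset (Fin n))} (hρ : IsPartitionM ρ) :
    ρ.sum = Finset.univ.val :=
  (Multiset.Nodup.ext hρ.2.1 Finset.univ.nodup).2 fun i => by simp [hρ.2.2 i]

theorem val_add_val_univ_sdiff (A : Finset (Fin n)) :
    A.val + (Finset.univ \ A).val = Finset.univ.val := by
  rw [Finset.sdiff_val]
  exact add_tsub_cancel_of_le (Finset.val_le_iff.2 A.subset_univ)

theorem IsPartitionM.downReach_of_onlyBlock {ρ : Multiset (Multiset (Fin n))}
    (hρ : IsPartitionM ρ) {A : Finset (Fin n)} {B : Multiset (Fin n)} (hB : B ∈ ρ)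
    (hAB : A.val ≤ B) : DownReach S (onlyBlock A) ρ := by
  obtain ⟨P, rfl⟩ := Multiset.exists_cons_of_mem hB
  obtain ⟨C, rfl⟩ := Multiset.le_iff_exists_add.1 hAB
  have compl_eq : (Finset.univ \ A).val = C + P.sum := by
    refine add_left_cancel (a := A.val) ?_
    rw [val_add_val_univ_sdiff, ← hρ.sum_eq, Multiset.sum_cons, add_assoc]
  have merge_block := downReach_merge_singletons (S := S) A.val C (P.sum.map ({·}))
  have merge_rest := downReach_of_singletons (S := S)
    (fun B hB => hρ.1 B (Multiset.mem_cons_of_mem hB)) {A.val + C}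
  rw [add_comm _ {_}, Multiset.singleton_add, add_comm _ {_}, Multiset.singleton_add] at merge_rest
  rw [onlyBlock, compl_eq, Multiset.map_add]
  exact merge_block.trans merge_rest

theorem plusM_single_sub_single {i j : Fin n} (hij : i ≠ j) :
    plusM (Pi.single i 1 - Pi.single j 1) = {i} := by
  rw [plusM, ← Finset.singleton_val, Finset.val_inj]
  ext t
  simp only [Finset.mem_filter, Finset.mem_univ, true_and, Finset.mem_singleton, Pi.sub_apply,
    Pi.single_apply]
  split_ifs <;> simp_all; norm_num

theorem plusM_neg (x : Fin n → ℝ) : plusM (-x) = minusM x := by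
  simp [plusM, minusM, neg_eq_iff_eq_neg]

theorem minusM_single_sub_single {i j : Fin n} (hij : i ≠ j) :
    minusM (Pi.single i 1 - Pi.single j 1) = {j} := by
  rw [← plusM_neg, neg_sub, plusM_single_sub_single hij.symm]

theorem downReach_exchange {i j : Fin n} (hS : Pi.single i 1 - Pi.single j 1 ∈ S)
    (C : Multiset (Fin n)) (R : Multiset (Multiset (Fin n))) :
    DownReach S ((i ::ₘ C) ::ₘ R) ((j ::ₘ C) ::ₘ R) := by
  rcases eq_or_ne i j with rfl | hij
  · exact .refl
  · have swap := DownStep.swap (i ::ₘ C) R _ hS (by simp [plusM_single_sub_single hij])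
    rw [plusM_single_sub_single hij, minusM_single_sub_single hij, Multiset.sub_singleton,
      Multiset.erase_cons_head, add_comm, Multiset.singleton_add] at swap
    exact .single swap

theorem downReach_cons_of_rel {B C : Multiset (Fin n)}
    (h : B.Rel (fun i j => Pi.single i 1 - Pi.single j 1 ∈ S) C)
    (D : Multiset (Fin n)) (R : Multiset (Multiset (Fin n))) :
    DownReach S ((D + B) ::ₘ R) ((D + C) ::ₘ R) := by
  induction h generalizing D with
  | zero => exact .refl
  | @cons i j B C hij _ ih =>
    have exchange_tail := ih (i ::ₘ D)
    have exchange_head := downReach_exchange hij (D + C) R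
    simp only [Multiset.cons_add, Multiset.add_cons] at exchange_tail exchange_head ⊢
    exact exchange_tail.trans exchange_head

theorem downReach_add_of_rel {P Q : Multiset (Multiset (Fin n))}
    (h : P.Rel (Multiset.Rel fun i j => Pi.single i 1 - Pi.single j 1 ∈ S) Q)
    (R : Multiset (Multiset (Fin n))) : DownReach S (R + P) (R + Q) := by
  induction h generalizing R with
  | zero => exact .refl
  | @cons B C P Q hBC _ ih =>
    have exchange_tail := ih (B ::ₘ R)
    have exchange_head := downReach_cons_of_rel hBC 0 (R + Q)
    simp only [Multiset.cons_add, Multiset.add_cons, zero_add] at exchange_tail exchange_head ⊢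
    exact exchange_tail.trans exchange_head

end Reachability

section Residue

variable {n : ℕ} {S : Set (Fin n → ℝ)} {p : Fin n → Prop} [DecidablePred p] {d : ℕ}

/-- The sum over the blocks of `P` of the residue modulo `d` of the number of elements satisfying
`p`. It is the monovariant that obstructs reachability. -/
def residueSum (d : ℕ) (p : Fin n → Prop) [DecidablePred p] (P : Multiset (Multiset (Fin n))) : ℕ :=
  (P.map fun B => B.countP p % d).sum

theorem residueSum_cons (B : Multiset (Fin n)) (P : Multiset (Multiset (Fin n))) :
    residueSum d p (B ::ₘ P) = B.countP p % d + residueSum d p P := by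
  simp [residueSum]

theorem DownStep.residueSum_le
    (hS : ∀ x ∈ S, (plusM x).countP p ≡ (minusM x).countP p [MOD d])
    {P Q : Multiset (Multiset (Fin n))} (h : DownStep S P Q) :
    residueSum d p Q ≤ residueSum d p P := by
  cases h with
  | merge B₁ B₂ R =>
    simp only [residueSum_cons, Multiset.countP_add, Nat.add_mod (B₁.countP p), ← add_assoc]
    gcongr
    exact Nat.mod_le _ _
  | swap B R x hx hsub =>
    have count_modEq : (B - plusM x + minusM x).countP p ≡ B.countP p [MOD d] :=
      calc (B - plusM x + minusM x).countP p
          = (B - plusM x).countP p + (minusM x).countP p := Multiset.countP_add ..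
        _ ≡ (B - plusM x).countP p + (plusM x).countP p [MOD d] := (hS x hx).symm.add_left _
        _ = B.countP p := by rw [← Multiset.countP_add, tsub_add_cancel_of_le hsub]
    rw [residueSum_cons, residueSum_cons, count_modEq]

theorem DownReach.residueSum_le
    (hS : ∀ x ∈ S, (plusM x).countP p ≡ (minusM x).countP p [MOD d])
    {P Q : Multiset (Multiset (Fin n))} (h : DownReach S P Q) :
    residueSum d p Q ≤ residueSum d p P := by
  induction h with
  | refl => exact le_rfl
  | tail _ step ih => exact (step.residueSum_le hS).trans ih

theorem sum_map_countP (P : Multiset (Multiset (Fin n))) :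
    (P.map (Multiset.countP p)).sum = P.sum.countP p :=
  (map_multiset_sum (Multiset.countPAddMonoidHom p) P).symm

theorem residueSum_le_countP (P : Multiset (Multiset (Fin n))) :
    residueSum d p P ≤ P.sum.countP p :=
  (Multiset.sum_map_le_sum_map _ _ fun _ _ => Nat.mod_le _ _).trans_eq (sum_map_countP P)

theorem residueSum_eq_countP {P : Multiset (Multiset (Fin n))} (hP : ∀ B ∈ P, B.countP p < d) :
    residueSum d p P = P.sum.countP p := by
  rw [residueSum, Multiset.map_congr rfl fun B hB => Nat.mod_eq_of_lt (hP B hB), sum_map_countP]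

theorem residueSum_onlyBlock_lt {A : Finset (Fin n)} (hA : ∀ i ∈ A, p i) (hA₀ : A.Nonempty) :
    residueSum A.card p (onlyBlock A) < (Finset.univ : Finset (Fin n)).val.countP p := by
  have count_block : A.val.countP p = A.card := Multiset.countP_eq_card.2 hA
  have residue_singletons := residueSum_le_countP (d := A.card) (p := p)
    ((Finset.univ \ A).val.map ({·}))
  rw [Multiset.sum_map_singleton] at residue_singletons
  rw [onlyBlock, residueSum_cons, count_block, Nat.mod_self, zero_add, ← val_add_val_univ_sdiff A,
    Multiset.countP_add, count_block]
  have := hA₀.card_pos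
  omega

theorem exists_card_le_countP_of_downReach {A : Finset (Fin n)} (hA : ∀ i ∈ A, p i)
    (hA₀ : A.Nonempty)
    (hS : ∀ x ∈ S, (plusM x).countP p ≡ (minusM x).countP p [MOD A.card])
    {ρ : Multiset (Multiset (Fin n))} (hρ : IsPartitionM ρ) (h : DownReach S (onlyBlock A) ρ) :
    ∃ B ∈ ρ, A.card ≤ B.countP p := by
  by_contra! small
  have residue_le := h.residueSum_le hS
  rw [residueSum_eq_countP small, hρ.sum_eq] at residue_le
  exact residue_le.not_gt (residueSum_onlyBlock_lt hA hA₀)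

end Residue

section WeightCut

variable {n : ℕ} {w : Fin n → ℕ} {x : Fin n → ℝ}

/-- The cut associated to the integer partition with parts `w i`. -/
def weightCut (w : Fin n → ℕ) : Set (Fin n → ℝ) :=
  {x | IsCube x ∧ ∑ i, (w i : ℝ) * x i = 0}

theorem IsCube.sum_mul_eq (hx : IsCube x) (f : Fin n → ℝ) :
    ∑ i, f i * x i = ((plusM x).map f).sum - ((minusM x).map f).sum := by
  change _ = ∑ i with x i = 1, f i - ∑ i with x i = -1, f i
  rw [Finset.sum_filter, Finset.sum_filter, ← Finset.sum_sub_distrib]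
  refine Finset.sum_congr rfl fun i _ => ?_
  rcases hx i with h | h | h <;> norm_num [h]

theorem IsCube.sum_ite_eq_countP (hx : IsCube x) (p : Fin n → Prop) [DecidablePred p] :
    (∑ i, if p i then x i else 0) = ((plusM x).countP p : ℝ) - (minusM x).countP p := by
  have count_eq (M : Multiset (Fin n)) :
      (M.map fun i => if p i then (1 : ℝ) else 0).sum = M.countP p := by
    induction M using Multiset.induction_on with
    | empty => simp
    | cons i M ih => by_cases h : p i <;> simp [h, ih, add_comm]
  simpa [count_eq] using hx.sum_mul_eq fun i => if p i then (1 : ℝ) else 0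

theorem countP_plusM (x : Fin n → ℝ) (p : Fin n → Prop) [DecidablePred p] :
    (plusM x).countP p = (Finset.univ.filter fun i => p i ∧ x i = 1).card := by
  rw [plusM, Multiset.countP_eq_card_filter, ← Finset.filter_val, Finset.filter_filter]
  simp only [and_comm, Finset.card_def]

theorem mem_weightCut_iff :
    x ∈ weightCut w ↔ IsCube x ∧ ((plusM x).map w).sum = ((minusM x).map w).sum := by
  have cast_sum (M : Multiset (Fin n)) :
      (M.map fun i => (w i : ℝ)).sum = ((M.map w).sum : ℕ) := by
    simp [Multiset.map_map]
  refine and_congr_right fun hx => ?_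
  rw [hx.sum_mul_eq, cast_sum, cast_sum, sub_eq_zero, Nat.cast_inj]

theorem single_sub_single_mem_weightCut {i j : Fin n} (h : w i = w j) :
    Pi.single i 1 - Pi.single j 1 ∈ weightCut w := by
  refine ⟨fun t => ?_, by simp [mul_sub, Finset.sum_sub_distrib, Pi.single_apply, h]⟩
  simp only [Pi.sub_apply, Pi.single_apply]
  split_ifs <;> simp

theorem downReach_of_map_map_eq {P Q : Multiset (Multiset (Fin n))}
    (h : P.map (Multiset.map w) = Q.map (Multiset.map w)) : DownReach (weightCut w) P Q := by
  have rel : P.Rel (Multiset.Rel fun i j => w i = w j) Q := by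
    simpa only [← Multiset.rel_eq, Multiset.rel_map] using h
  have reach := downReach_add_of_rel (S := weightCut w) (rel.mono fun _ _ _ _ hBC =>
    hBC.mono fun _ _ _ _ => single_sub_single_mem_weightCut) 0
  rwa [zero_add, zero_add] at reach

theorem downReach_onlyBlock_of_map_eq {A A' : Finset (Fin n)} (h : A.val.map w = A'.val.map w) :
    DownReach (weightCut w) (onlyBlock A) (onlyBlock A') := by
  have compl_eq : (Finset.univ \ A).val.map w = (Finset.univ \ A').val.map w := by
    refine add_left_cancel (a := A.val.map w) ?_
    conv_rhs => rw [h]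
    rw [← Multiset.map_add, ← Multiset.map_add, val_add_val_univ_sdiff, val_add_val_univ_sdiff]
  have map_singletons (M : Multiset (Fin n)) :
      (M.map ({·})).map (Multiset.map w) = (M.map w).map ({·}) := by
    simp [Function.comp_def]
  refine downReach_of_map_map_eq ?_
  rw [onlyBlock, onlyBlock, Multiset.map_cons, Multiset.map_cons, map_singletons, map_singletons,
    compl_eq, h]

variable {a b d : ℕ}

theorem downReach_onlyBlock_of_card_le_countP {A : Finset (Fin n)} (hA : ∀ i ∈ A, w i = a)
    {ρ : Multiset (Multiset (Fin n))} (hρ : IsPartitionM ρ) {B : Multiset (Fin n)} (hB : B ∈ ρ)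
    (hAB : A.card ≤ B.countP (w · = a)) : DownReach (weightCut w) (onlyBlock A) ρ := by
  have nodup : B.Nodup := Multiset.nodup_of_le (Multiset.single_le_sum (by simp) B hB) hρ.2.1
  rw [Multiset.countP_eq_card_filter] at hAB
  obtain ⟨A', hA', card_eq⟩ :=
    Finset.exists_subset_card_eq (s := ⟨B.filter (w · = a), nodup.filter _⟩) hAB
  have map_eq : A.val.map w = A'.val.map w := by
    have weight_eq : ∀ i ∈ A', w i = a := fun i hi => (Multiset.mem_filter.1 (hA' hi)).2
    rw [Multiset.map_congr rfl hA, Multiset.map_congr rfl weight_eq, Multiset.map_const',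
      Multiset.map_const', Finset.card_val, Finset.card_val, card_eq]
  exact (downReach_onlyBlock_of_map_eq map_eq).trans <| hρ.downReach_of_onlyBlock hB <|
    (Finset.val_le_iff.2 hA').trans (Multiset.filter_le _ B)

theorem sum_map_modEq_mul_countP (hw : ∀ i, w i ≠ a → b ∣ w i) (M : Multiset (Fin n)) :
    (M.map w).sum ≡ a * M.countP (w · = a) [MOD b] := by
  induction M using Multiset.induction_on with
  | empty => simp [Nat.ModEq.rfl]
  | cons i M ih =>
    rw [Multiset.map_cons, Multiset.sum_cons]
    by_cases h : w i = a
    · rw [Multiset.countP_cons_of_pos M h, h, mul_add_one, add_comm]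
      exact ih.add_right a
    · rw [Multiset.countP_cons_of_neg M h]
      simpa using (Nat.modEq_zero_iff_dvd.2 (hw i h)).add ih

theorem modEq_of_mul_modEq_mul_of_dvd_lcm (ha : 0 < a) (hd : a * d ∣ a.lcm b) {s t : ℕ}
    (h : a * s ≡ a * t [MOD b]) : s ≡ t [MOD d] := by
  have mod_a : a * s ≡ a * t [MOD a] := by simp [Nat.ModEq]
  exact ((Nat.mod_lcm mod_a h).of_dvd hd).mul_left_cancel' ha.ne'

theorem countP_plusM_modEq_countP_minusM (ha : 0 < a) (hd : a * d ∣ a.lcm b)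
    (hw : ∀ i, w i ≠ a → b ∣ w i) (hx : x ∈ weightCut w) :
    (plusM x).countP (w · = a) ≡ (minusM x).countP (w · = a) [MOD d] :=
  modEq_of_mul_modEq_mul_of_dvd_lcm ha hd <|
    (sum_map_modEq_mul_countP hw (plusM x)).symm.trans <|
      (mem_weightCut_iff.1 hx).2 ▸ sum_map_modEq_mul_countP hw (minusM x)

theorem downClos_weightCut_onlyBlock (ha : 0 < a) {A : Finset (Fin n)} (hA₀ : A.Nonempty)
    (hA : ∀ i ∈ A, w i = a) (hd : a * A.card ∣ a.lcm b) (hw : ∀ i, w i ≠ a → b ∣ w i) :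
    downClos (weightCut w) (onlyBlock A) =
      {ρ | IsPartitionM ρ ∧ ∃ B ∈ ρ, A.card ≤ B.countP (w · = a)} := by
  ext ρ
  refine and_congr_right fun hρ => ⟨?_, ?_⟩
  · exact exists_card_le_countP_of_downReach hA hA₀
      (fun _ => countP_plusM_modEq_countP_minusM ha hd hw) hρ
  · rintro ⟨B, hB, hAB⟩
    exact downReach_onlyBlock_of_card_le_countP hA hρ hB hAB

theorem IsCube.sum_partOf (hx : IsCube x) : (partOf x).sum = Finset.univ.val := by
  rw [partOf, Multiset.sum_cons, Multiset.sum_cons, Multiset.sum_map_singleton]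
  ext i
  simp only [plusM, minusM, Multiset.count_add, Multiset.count_eq_of_nodup (Finset.nodup _)]
  rcases hx i with h | h | h <;> norm_num [h]

theorem neg_mem_weightCut (hx : x ∈ weightCut w) : -x ∈ weightCut w :=
  ⟨fun i => by rcases hx.1 i with h | h | h <;> simp [h], by simp [hx.2]⟩

theorem plusM_ne_zero_of_mem_weightCut (hw : ∀ i, 0 < w i) (hx : x ∈ weightCut w) (hx₀ : x ≠ 0) :
    plusM x ≠ 0 := by
  intro plus_empty
  have minus_sum := (mem_weightCut_iff.1 hx).2
  rw [plus_empty, Multiset.map_zero, Multiset.sum_zero, eq_comm, Multiset.sum_eq_zero_iff]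
    at minus_sum
  have minus_empty : minusM x = 0 := Multiset.eq_zero_of_forall_notMem fun i hi =>
    (hw i).ne' (minus_sum _ (Multiset.mem_map_of_mem w hi))
  refine hx₀ (funext fun i => ?_)
  rcases hx.1 i with h | h | h
  · exact absurd (by simp [minusM, h] : i ∈ minusM x) (by simp [minus_empty])
  · exact h
  · exact absurd (by simp [plusM, h] : i ∈ plusM x) (by simp [plus_empty])

theorem isPartitionM_partOf (hw : ∀ i, 0 < w i) (hx : x ∈ weightCut w) (hx₀ : x ≠ 0) :
    IsPartitionM (partOf x) := by
  refine ⟨fun B hB => ?_, hx.1.sum_partOf ▸ Finset.nodup _, fun i => ?_⟩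
  · rw [partOf, Multiset.mem_cons, Multiset.mem_cons, Multiset.mem_map] at hB
    rcases hB with rfl | rfl | ⟨i, -, rfl⟩
    · exact plusM_ne_zero_of_mem_weightCut hw hx hx₀
    · rw [← plusM_neg]
      exact plusM_ne_zero_of_mem_weightCut hw (neg_mem_weightCut hx) (neg_ne_zero.2 hx₀)
    · exact Multiset.singleton_ne_zero i
  · rw [hx.1.sum_partOf]
    exact Finset.mem_univ i

theorem exists_mem_partOf_le_countP_iff {p : Fin n → Prop} [DecidablePred p] (hd : 1 < d) :
    (∃ B ∈ partOf x, d ≤ B.countP p) ↔ d ≤ (plusM x).countP p ∨ d ≤ (minusM x).countP p := by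
  have singleton_lt (i : Fin n) : ({i} : Multiset (Fin n)).countP p < d :=
    (Multiset.countP_le_card p {i}).trans_lt (by rwa [Multiset.card_singleton])
  simp [partOf, (singleton_lt _).not_ge]

theorem cutMinus_weightCut_onlyBlock (hpos : ∀ i, 0 < w i) {A : Finset (Fin n)}
    (hA₁ : 1 < A.card) (hA : ∀ i ∈ A, w i = a) (hd : a * A.card ∣ a.lcm b)
    (hw : ∀ i, w i ≠ a → b ∣ w i) :
    cutMinus (weightCut w) (downClos (weightCut w) (onlyBlock A)) =
      {x | x ∈ weightCut w ∧ (plusM x).countP (w · = a) = (minusM x).countP (w · = a) ∧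
        (plusM x).countP (w · = a) < A.card} := by
  obtain ⟨i, hi⟩ : A.Nonempty := Finset.card_pos.1 (by omega)
  have ha : 0 < a := hA i hi ▸ hpos i
  rw [downClos_weightCut_onlyBlock ha ⟨i, hi⟩ hA hd hw]
  ext x
  refine and_congr_right fun hx => ?_
  have partition_of_large : (∃ B ∈ partOf x, A.card ≤ B.countP (w · = a)) →
      IsPartitionM (partOf x) := by
    rw [exists_mem_partOf_le_countP_iff hA₁]
    refine fun large => isPartitionM_partOf hpos hx ?_
    rintro rfl
    have plus_empty : plusM (0 : Fin n → ℝ) = 0 := by simp [plusM]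
    have minus_empty : minusM (0 : Fin n → ℝ) = 0 := by simp [minusM]
    rw [plus_empty, minus_empty, Multiset.countP_zero] at large
    omega
  rw [Set.mem_ofPred_eq, and_iff_right_of_imp partition_of_large,
    exists_mem_partOf_le_countP_iff hA₁, not_or, not_le, not_le]
  refine ⟨fun ⟨plus_lt, minus_lt⟩ => ⟨?_, plus_lt⟩, fun ⟨eq, plus_lt⟩ => ⟨plus_lt, eq ▸ plus_lt⟩⟩
  exact (countP_plusM_modEq_countP_minusM ha hd hw hx).eq_of_lt_of_lt plus_lt minus_lt

end WeightCut

section Restrict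

variable {n k : ℕ}

/-- The partial identification of the first `k` indices with `Fin k`. -/
def firstIndex (k : ℕ) (i : Fin n) : Option (Fin k) :=
  if h : (i : ℕ) < k then some ⟨i, h⟩ else none

theorem firstIndex_eq_some_iff {i : Fin n} {j : Fin k} :
    firstIndex k i = some j ↔ (i : ℕ) = j := by
  simp only [firstIndex, Option.dite_none_right_eq_some, Option.some.injEq, Fin.ext_iff]
  exact ⟨fun ⟨_, h⟩ => h, fun h => ⟨h ▸ j.isLt, h⟩⟩

theorem card_filterMap_firstIndex (B : Multiset (Fin n)) :
    (B.filterMap (firstIndex k)).card = B.countP fun i : Fin n => (i : ℕ) < k := by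
  induction B using Multiset.induction_on with
  | empty => simp
  | cons i B ih =>
    by_cases h : (i : ℕ) < k
    · rw [Multiset.filterMap_cons_some _ _ _ (dif_pos h), Multiset.card_cons, ih,
        Multiset.countP_cons, if_pos h]
    · rw [Multiset.filterMap_cons_none _ _ (dif_neg h), ih, Multiset.countP_cons,
        if_neg h, add_zero]

theorem restrictFirst_eq (ρ : Multiset (Multiset (Fin n))) :
    restrictFirst k ρ = (ρ.map (Multiset.filterMap (firstIndex k))).filter (· ≠ 0) := by
  -- `restrictFirst` elaborates with its blocks coerced to multisets of naturals.
  have coe_block (B : Multiset (Fin n)) : (do let i ← B; pure (i : ℕ)) = B.map Fin.val := by simp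
  simp only [restrictFirst, coe_block, Multiset.filterMap_map]
  rfl

theorem sum_restrictFirst (ρ : Multiset (Multiset (Fin n))) :
    (restrictFirst k ρ).sum = ρ.sum.filterMap (firstIndex k) := by
  rw [restrictFirst_eq]
  induction ρ using Multiset.induction_on with
  | empty => simp
  | cons B ρ ih =>
    rw [Multiset.map_cons, Multiset.sum_cons, Multiset.filterMap_add, ← ih]
    by_cases h : B.filterMap (firstIndex k) = 0
    · rw [Multiset.filter_cons_of_neg (p := (· ≠ 0)) _ (not_not.2 h), h, zero_add]
    · rw [Multiset.filter_cons_of_pos (p := (· ≠ 0)) _ h, Multiset.sum_cons]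

theorem IsPartitionM.restrictFirst (hkn : k ≤ n) {ρ : Multiset (Multiset (Fin n))}
    (hρ : IsPartitionM ρ) : IsPartitionM (restrictFirst k ρ) := by
  refine ⟨fun B hB => (Multiset.mem_filter.1 hB).2, ?_, fun j => ?_⟩
  · rw [sum_restrictFirst]
    refine hρ.2.1.filterMap _ fun i i' j hi hi' => Fin.ext ?_
    rw [firstIndex_eq_some_iff.1 hi, firstIndex_eq_some_iff.1 hi']
  · rw [sum_restrictFirst, Multiset.mem_filterMap]
    exact ⟨Fin.castLE hkn j, hρ.2.2 _, firstIndex_eq_some_iff.2 rfl⟩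

theorem exists_mem_restrictFirst_le_card_iff {d : ℕ} (hd : 0 < d)
    (ρ : Multiset (Multiset (Fin n))) :
    (∃ B ∈ restrictFirst k ρ, d ≤ B.card) ↔ ∃ B ∈ ρ, d ≤ B.countP fun i : Fin n => (i : ℕ) < k := by
  simp only [restrictFirst_eq, Multiset.mem_filter, Multiset.mem_map,
    ← card_filterMap_firstIndex]
  constructor
  · rintro ⟨_, ⟨⟨B, hB, rfl⟩, -⟩, h⟩
    exact ⟨B, hB, h⟩
  · rintro ⟨B, hB, h⟩
    exact ⟨_, ⟨⟨B, hB, rfl⟩, Multiset.card_pos.1 (hd.trans_le h)⟩, h⟩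

end Restrict

section Ones

variable {k d : ℕ}

theorem card_filter_val_lt {n : ℕ} (h : d ≤ n) :
    (Finset.univ.filter fun i : Fin n => (i : ℕ) < d).card = d := by
  rw [Fin.card_filter_val_lt, min_eq_right h]

theorem TOnes_eq_weightCut (k : ℕ) : TOnes k = weightCut fun _ => 1 := by
  simp [TOnes, weightCut]

theorem downClos_TOnes (hd : 0 < d) (hdk : d ≤ k) :
    downClos (TOnes k) (firstBlock d k) = {ρ | IsPartitionM ρ ∧ ∃ B ∈ ρ, d ≤ B.card} := by
  have card_eq := card_filter_val_lt hdk
  rw [TOnes_eq_weightCut, firstBlock, downClos_weightCut_onlyBlock (a := 1) (b := d) one_pos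
    (Finset.card_pos.1 (by rwa [card_eq])) (fun _ _ => rfl) (by simp [card_eq]) (by simp)]
  simp [card_eq]

theorem cutMinus_TOnes (hd : 1 < d) (hdk : d ≤ k) :
    cutMinus (TOnes k) (downClos (TOnes k) (firstBlock d k)) =
      {z | z ∈ TOnes k ∧ (Finset.univ.filter fun i : Fin k => z i = 1).card < d} := by
  have card_eq := card_filter_val_lt hdk
  rw [TOnes_eq_weightCut, firstBlock, cutMinus_weightCut_onlyBlock (a := 1) (b := d)
    (fun _ => one_pos) (by rwa [card_eq]) (fun _ _ => rfl) (by simp [card_eq]) (by simp)]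
  ext z
  refine and_congr_right fun hz => ?_
  have balanced : (plusM z).card = (minusM z).card := by
    simpa using (mem_weightCut_iff.1 hz).2
  simp only [card_eq, Multiset.countP_True, balanced, true_and]
  rw [← balanced, plusM, Finset.card_val]

end Ones

section Resonance

variable {a b g bbar d k l m : ℕ}

/-- The parts `(a^k, b^l, g^m)` of the integer partition defining `SGAB`, as a weight. -/
def gabWeight (a b g k l m : ℕ) (i : Fin (k + l + m)) : ℕ :=
  if (i : ℕ) < k then a else if (i : ℕ) < k + l then b else g

theorem SGAB_eq_weightCut (a b g k l m : ℕ) :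
    SGAB a b g k l m = weightCut (gabWeight a b g k l m) := by
  simp only [SGAB, weightCut, gabWeight, Nat.cast_ite]

theorem dvd_gabWeight (hbg : b ∣ g) {i : Fin (k + l + m)} (hi : gabWeight a b g k l m i ≠ a) :
    b ∣ gabWeight a b g k l m i := by
  unfold gabWeight at hi ⊢
  split_ifs at hi ⊢
  exacts [absurd rfl hi, dvd_rfl, hbg]

theorem gabWeight_of_val_lt (hdk : d ≤ k) :
    ∀ i ∈ Finset.univ.filter (fun i : Fin (k + l + m) => (i : ℕ) < d),
      gabWeight a b g k l m i = a :=
  fun _ hi => if_pos ((Finset.mem_filter.1 hi).2.trans_le hdk)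

theorem gabWeight_eq_iff (hba : ¬ b ∣ a) (hbg : b ∣ g) (i : Fin (k + l + m)) :
    gabWeight a b g k l m i = a ↔ (i : ℕ) < k := by
  refine ⟨fun h => ?_, fun h => if_pos h⟩
  by_contra hi
  rw [gabWeight, if_neg hi] at h
  split_ifs at h
  exacts [hba h.dvd, hba (h ▸ hbg)]

theorem not_dvd_of_mul_dvd_lcm (ha : 0 < a) (hd : 1 < d) (h : a * d ∣ a.lcm b) : ¬ b ∣ a := by
  intro hba
  rw [Nat.lcm_eq_left hba] at h
  have := Nat.le_of_dvd ha h
  nlinarith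

theorem downClos_SGAB (ha : 0 < a) (hd : 1 < d) (hdvd : a * d ∣ a.lcm b) (hbg : b ∣ g)
    (hdk : d ≤ k) :
    downClos (SGAB a b g k l m) (firstBlock d (k + l + m)) =
      {ρ | IsPartitionM ρ ∧
        ∃ B ∈ ρ, d ≤ B.countP fun i : Fin (k + l + m) => (i : ℕ) < k} := by
  have card_eq := card_filter_val_lt (show d ≤ k + l + m by omega)
  rw [SGAB_eq_weightCut, firstBlock, downClos_weightCut_onlyBlock ha
    (Finset.card_pos.1 (by omega)) (gabWeight_of_val_lt hdk) (by rwa [card_eq])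
    (fun _ => dvd_gabWeight hbg)]
  simp only [card_eq, gabWeight_eq_iff (not_dvd_of_mul_dvd_lcm ha hd hdvd) hbg]

theorem downClos_SGAB_eq_restrictFirst (ha : 0 < a) (hd : 1 < d) (hdvd : a * d ∣ a.lcm b)
    (hbg : b ∣ g) (hdk : d ≤ k) :
    downClos (SGAB a b g k l m) (firstBlock d (k + l + m)) =
      {ρ | IsPartitionM ρ ∧ restrictFirst k ρ ∈ downClos (TOnes k) (firstBlock d k)} := by
  rw [downClos_SGAB ha hd hdvd hbg hdk, downClos_TOnes (by omega) hdk]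
  ext ρ
  refine and_congr_right fun hρ => ?_
  rw [Set.mem_ofPred_eq, exists_mem_restrictFirst_le_card_iff (by omega),
    and_iff_right (hρ.restrictFirst (by omega))]

theorem sum_gabWeight_eq (x : Fin (k + l + m) → ℝ) :
    ∑ i, (gabWeight a b g k l m i : ℝ) * x i =
      a * (∑ i : Fin (k + l + m), if (i : ℕ) < k then x i else 0) +
      ∑ i : Fin (k + l + m),
        (if (i : ℕ) < k then 0 else if (i : ℕ) < k + l then (b : ℝ) else (g : ℝ)) * x i := by
  rw [Finset.mul_sum, ← Finset.sum_add_distrib]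
  refine Finset.sum_congr rfl fun i _ => ?_
  unfold gabWeight
  split_ifs <;> simp

theorem cutMinus_SGAB (ha : 0 < a) (hd : 1 < d) (hdvd : a * d ∣ a.lcm b) (hbg : b ∣ g)
    (hg : 0 < g) (hdk : d ≤ k) :
    cutMinus (SGAB a b g k l m) (downClos (SGAB a b g k l m) (firstBlock d (k + l + m))) =
      {x | IsCube x ∧ (∑ i : Fin (k + l + m), if (i : ℕ) < k then x i else 0) = 0 ∧
        (Finset.univ.filter (fun i : Fin (k + l + m) => (i : ℕ) < k ∧ x i = 1)).card < d ∧
        (∑ i : Fin (k + l + m),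
          (if (i : ℕ) < k then 0 else if (i : ℕ) < k + l then (b : ℝ) else (g : ℝ)) * x i)
          = 0} := by
  have hb : 0 < b := Nat.pos_of_dvd_of_pos hbg hg
  have weight_pos (i : Fin (k + l + m)) : 0 < gabWeight a b g k l m i := by
    unfold gabWeight
    split_ifs <;> assumption
  have card_eq := card_filter_val_lt (show d ≤ k + l + m by omega)
  rw [SGAB_eq_weightCut, firstBlock, cutMinus_weightCut_onlyBlock weight_pos (by rwa [card_eq])
    (gabWeight_of_val_lt hdk) (by rwa [card_eq]) (fun _ => dvd_gabWeight hbg)]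
  simp only [card_eq, gabWeight_eq_iff (not_dvd_of_mul_dvd_lcm ha hd hdvd) hbg, ← countP_plusM]
  ext x
  have first_sum_eq_zero_iff (hx : IsCube x) :
      (∑ i : Fin (k + l + m), if (i : ℕ) < k then x i else 0) = 0 ↔
        (plusM x).countP (fun i : Fin (k + l + m) => (i : ℕ) < k) =
          (minusM x).countP fun i : Fin (k + l + m) => (i : ℕ) < k := by
    rw [hx.sum_ite_eq_countP, sub_eq_zero, Nat.cast_inj]
  constructor
  · rintro ⟨⟨hx, weight_sum⟩, balanced, plus_lt⟩
    have first_sum := (first_sum_eq_zero_iff hx).2 balanced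
    rw [sum_gabWeight_eq, first_sum, mul_zero, zero_add] at weight_sum
    exact ⟨hx, first_sum, plus_lt, weight_sum⟩
  · rintro ⟨hx, first_sum, plus_lt, last_sum⟩
    refine ⟨⟨hx, ?_⟩, (first_sum_eq_zero_iff hx).1 first_sum, plus_lt⟩
    rw [sum_gabWeight_eq, first_sum, last_sum, mul_zero, add_zero]

/-- The coordinates of weight `a` in the resonance `(g^m, a^k, b^l)`. -/
def firstCoords {M : Type*} (x : Fin (k + l + m) → M) (i : Fin k) : M :=
  x (Fin.castAdd m (Fin.castAdd l i))

/-- The coordinates of weights `b` and `g` in the resonance `(g^m, a^k, b^l)`. -/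
def lastCoords {M : Type*} (x : Fin (k + l + m) → M) (j : Fin (l + m)) : M :=
  x (Fin.cast (add_assoc k l m).symm (Fin.natAdd k j))

theorem sum_eq_sum_firstCoords_add_sum_lastCoords {M : Type*} [AddCommMonoid M]
    (f : Fin (k + l + m) → M) : ∑ i, f i = ∑ i, firstCoords f i + ∑ j, lastCoords f j := by
  rw [← (finCongr (add_assoc k l m).symm).sum_comp f, Fin.sum_univ_add]
  rfl

theorem cutMinus_SGAB_eq_coords (ha : 0 < a) (hd : 1 < d) (hdvd : a * d ∣ a.lcm b)
    (hbbar : b * bbar = g) (hg : 0 < g) (hdk : d ≤ k) :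
    cutMinus (SGAB a b g k l m) (downClos (SGAB a b g k l m) (firstBlock d (k + l + m))) =
      {x | IsCube x ∧
        firstCoords x ∈ cutMinus (TOnes k) (downClos (TOnes k) (firstBlock d k)) ∧
        lastCoords x ∈ UBbar bbar l m} := by
  rw [cutMinus_SGAB ha hd hdvd (Dvd.intro _ hbbar) hg hdk, cutMinus_TOnes hd hdk]
  have hb : (b : ℝ) ≠ 0 := Nat.cast_ne_zero.2 (left_ne_zero_of_mul (hbbar ▸ hg.ne'))
  ext x
  refine and_congr_right fun hx => ?_
  have first_sum : (∑ i : Fin (k + l + m), if (i : ℕ) < k then x i else 0) =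
      ∑ i, firstCoords x i := by
    rw [sum_eq_sum_firstCoords_add_sum_lastCoords]
    simp [firstCoords, lastCoords]
  have first_card :
      (Finset.univ.filter (fun i : Fin (k + l + m) => (i : ℕ) < k ∧ x i = 1)).card =
        (Finset.univ.filter (fun i => firstCoords x i = 1)).card := by
    rw [Finset.card_filter, Finset.card_filter, sum_eq_sum_firstCoords_add_sum_lastCoords]
    have last_eq_zero (j : Fin (l + m)) :
        lastCoords (fun i : Fin (k + l + m) => if (i : ℕ) < k ∧ x i = 1 then 1 else 0) j = 0 := by
      simp [lastCoords]
    rw [Finset.sum_eq_zero fun j _ => last_eq_zero j, add_zero]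
    exact Finset.sum_congr rfl fun i _ => if_congr (and_iff_right i.isLt) rfl rfl
  have last_sum : (∑ i : Fin (k + l + m),
      (if (i : ℕ) < k then 0 else if (i : ℕ) < k + l then (b : ℝ) else (g : ℝ)) * x i) =
      b * ∑ j : Fin (l + m), (if (j : ℕ) < l then 1 else (bbar : ℝ)) * lastCoords x j := by
    rw [sum_eq_sum_firstCoords_add_sum_lastCoords]
    simp [firstCoords, lastCoords, ← hbbar, Finset.mul_sum, mul_assoc]
  rw [first_sum, first_card, last_sum, mul_eq_zero, or_iff_right hb]
  exact ⟨fun ⟨h₁, h₂, h₃⟩ => ⟨⟨⟨fun i => hx _, h₁⟩, h₂⟩, fun j => hx _, h₃⟩,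
    fun ⟨⟨⟨_, h₁⟩, h₂⟩, _, h₃⟩ => ⟨h₁, h₂, h₃⟩⟩

theorem one_lt_of_mul_eq_lcm (ha : 0 < a) (hab : a < b) (h : a * d = a.lcm b) : 1 < d := by
  have b_le : b ≤ a * d := h ▸ Nat.le_of_dvd (Nat.lcm_pos ha (ha.trans hab)) (Nat.dvd_lcm_right a b)
  exact (Nat.lt_mul_iff_one_lt_right ha).1 (hab.trans_le b_le)

end Resonance

theorem relative_cut_g_a_b_general (a b g d bbar k l m : ℕ) (ha : 0 < a) (hd : 1 < d)
    (hdvd : a * d ∣ a.lcm b) (hbbar : b * bbar = g) (hg : 0 < g) (hk : d ≤ k) :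
    downClos (SGAB a b g k l m) (firstBlock d (k + l + m)) =
      {ρ | IsPartitionM ρ ∧
        restrictFirst k ρ ∈ downClos (TOnes k) (firstBlock d k)} ∧
    cutMinus (SGAB a b g k l m)
        (downClos (SGAB a b g k l m) (firstBlock d (k + l + m))) =
      {x | IsCube x ∧ (∑ i : Fin (k + l + m), if (i : ℕ) < k then x i else 0) = 0 ∧
        (Finset.univ.filter (fun i : Fin (k + l + m) => (i : ℕ) < k ∧ x i = 1)).card < d ∧
        (∑ i : Fin (k + l + m),
          (if (i : ℕ) < k then 0 else if (i : ℕ) < k + l then (b : ℝ) else (g : ℝ)) * x i)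
          = 0} ∧
    cutMinus (TOnes k) (downClos (TOnes k) (firstBlock d k)) =
      {z | z ∈ TOnes k ∧ (Finset.univ.filter (fun i : Fin k => z i = 1)).card < d} ∧
    cutMinus (SGAB a b g k l m)
        (downClos (SGAB a b g k l m) (firstBlock d (k + l + m))) =
      {x | IsCube x ∧
        firstCoords x ∈ cutMinus (TOnes k) (downClos (TOnes k) (firstBlock d k)) ∧
        lastCoords x ∈ UBbar bbar l m} :=
  have hbg : b ∣ g := Dvd.intro _ hbbar
  ⟨downClos_SGAB_eq_restrictFirst ha hd hdvd hbg hk, cutMinus_SGAB ha hd hdvd hbg hg hk,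
    cutMinus_TOnes hd hk, cutMinus_SGAB_eq_coords ha hd hdvd hbbar hg hk⟩

/-- the structure of the relative cut `Q(S, π↓S)` for the resonance
`(g^m, a^k, b^l)`, `g = lcm(a,b)`, where `π` has unique non-singleton block `{1,…,ā}`. -/
theorem relative_cut_g_a_b (a b g abar bbar k l m : ℕ)
    (ha : 2 ≤ a) (hab : a < b) (hg : g = Nat.lcm a b)
    (habar : a * abar = g) (hbbar : b * bbar = g)
    (hk : abar ≤ k) (hl : 1 ≤ l) :
    -- (i)
    downClos (SGAB a b g k l m) (firstBlock abar (k + l + m)) =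
      {ρ | IsPartitionM ρ ∧
        restrictFirst k ρ ∈ downClos (TOnes k) (firstBlock abar k)} ∧
    -- (ii)
    cutMinus (SGAB a b g k l m)
        (downClos (SGAB a b g k l m) (firstBlock abar (k + l + m))) =
      {x | IsCube x ∧ (∑ i : Fin (k + l + m), if (i : ℕ) < k then x i else 0) = 0 ∧
        (Finset.univ.filter (fun i : Fin (k + l + m) => (i : ℕ) < k ∧ x i = 1)).card < abar ∧
        (∑ i : Fin (k + l + m),
          (if (i : ℕ) < k then 0 else if (i : ℕ) < k + l then (b : ℝ) else (g : ℝ)) * x i)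
          = 0} ∧
    -- (iii)
    cutMinus (TOnes k) (downClos (TOnes k) (firstBlock abar k)) =
      {z | z ∈ TOnes k ∧ (Finset.univ.filter (fun i : Fin k => z i = 1)).card < abar} ∧
    cutMinus (SGAB a b g k l m)
        (downClos (SGAB a b g k l m) (firstBlock abar (k + l + m))) =
      {x | IsCube x ∧
        (fun i : Fin k => x (Fin.castLE (by omega) i)) ∈
          cutMinus (TOnes k) (downClos (TOnes k) (firstBlock abar k)) ∧
        (fun j : Fin (l + m) => x ⟨k + (j : ℕ), by have := j.isLt; omega⟩) ∈
          UBbar bbar l m} := by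
  exact relative_cut_g_a_b_general a b g abar bbar k l m (by omega)
    (one_lt_of_mul_eq_lcm (by omega) hab (habar.trans hg)) (habar.trans hg).dvd hbbar
    (hg ▸ Nat.lcm_pos (by omega) (by omega)) hk
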